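/- Let S = ⟨n₁,n₂,n₃,n₄⟩ be an almost symmetric numerical semigroup and f ∈ PF(S) \ {F(S)}. Then |Γ_f| + |Γ_{F(S)-f}| ≥ 4, where for g ∈ PF(S) \ {F(S)}, Γ_g is the set of pairs (i,j), i ≠ j, such that λ_{ij}·n_j - n_i = g, with λ_{ij} = max{K ∈ ℕ : K·n_j - n_i ∉ S}. -/

import Mathlib

/-- The numerical semigroup generated by `n`, viewed inside `ℤ`. -/
def NS {e : ℕ} (n : Fin e → ℕ) : Set ℤ :=
  {x | ∃ a : Fin e → ℕ, x = ∑ j, (a j : ℤ) * n j}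

/-- Pseudo-Frobenius numbers of the numerical semigroup generated by `n`. -/
def PF {e : ℕ} (n : Fin e → ℕ) : Set ℤ :=
  {x | x ∉ NS n ∧ ∀ i, x + (n i : ℤ) ∈ NS n}

/-- `F` is the Frobenius number: the maximum of `ℤ \ S`. -/
def IsFrob {e : ℕ} (n : Fin e → ℕ) (F : ℤ) : Prop :=
  F ∉ NS n ∧ ∀ x : ℤ, F < x → x ∈ NS n

/-- Almost symmetry with respect to the Frobenius number `F`. -/
def AlmostSym {e : ℕ} (n : Fin e → ℕ) (F : ℤ) : Prop :=
  ∀ x : ℤ, x ∉ NS n → F - x ∉ NS n → (x ∈ PF n ∧ F - x ∈ PF n)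

/-- `A` is an RF-matrix for `f`. -/
def IsRF {e : ℕ} (n : Fin e → ℕ) (f : ℤ) (A : Matrix (Fin e) (Fin e) ℤ) : Prop :=
  (∀ i, A i i = -1) ∧ (∀ i j, i ≠ j → 0 ≤ A i j) ∧
    (∀ i, ∑ j, A i j * (n j : ℤ) = f)

/-- `K = λ_{ij} = max {K ∈ ℕ : K·n_j - n_i ∉ S}`. -/
def IsLam {e : ℕ} (n : Fin e → ℕ) (i j : Fin e) (K : ℕ) : Prop :=
  ((K : ℤ) * n j - n i ∉ NS n) ∧
    ∀ L : ℕ, ((L : ℤ) * n j - n i ∉ NS n) → L ≤ K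

/-- `n` is a minimal generating system. -/
def MinGen {e : ℕ} (n : Fin e → ℕ) : Prop :=
  ∀ i, ¬ ∃ a : Fin e → ℕ, a i = 0 ∧ (n i : ℤ) = ∑ j, (a j : ℤ) * n j

/-- The set `Γ_g` of pairs `(i,j)`, `i ≠ j`, with `M_{ij} = λ_{ij}·n_j - n_i = g`. -/
def Gam (n : Fin 4 → ℕ) (g : ℤ) : Set (Fin 4 × Fin 4) :=
  {p | p.1 ≠ p.2 ∧ ∃ K : ℕ, IsLam n p.1 p.2 K ∧ (K : ℤ) * n p.2 - n p.1 = g}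

theorem NS_add {n : Fin 4 → ℕ} {x y : ℤ} (hx : x ∈ NS n) (hy : y ∈ NS n) : x + y ∈ NS n := by
  obtain ⟨a, rfl⟩ := hx
  obtain ⟨b, rfl⟩ := hy
  exact ⟨fun j => a j + b j, by push_cast; simp only [add_mul, Finset.sum_add_distrib]⟩

theorem NS_mul (n : Fin 4 → ℕ) (k : ℕ) (j : Fin 4) : (k : ℤ) * n j ∈ NS n := by
  refine ⟨fun i => if i = j then k else 0, ?_⟩
  simp

/-- Subtracting one generator that occurs in a factorization. -/
theorem NS_sub {n : Fin 4 → ℕ} (a : Fin 4 → ℕ) (j : Fin 4) (hj : a j ≠ 0) :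
    (∑ k, (a k : ℤ) * n k) - n j ∈ NS n := by
  refine ⟨fun k => if k = j then a k - 1 else a k, ?_⟩
  have h1 : ((a j - 1 : ℕ) : ℤ) = a j - 1 := by omega
  have h2 : ∀ k, (((if k = j then a k - 1 else a k : ℕ)) : ℤ) * n k
      = (a k : ℤ) * n k - if k = j then (n j : ℤ) else 0 := by
    intro k
    by_cases h : k = j
    · subst h; simp only [if_true, h1]; ring
    · simp [h]
  simp only [h2, Finset.sum_sub_distrib]
  simp

theorem row_mem {n : Fin 4 → ℕ} {f : ℤ} (hf : f ∈ PF n) (a : Fin 4 → ℕ) (i j : Fin 4)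
    (ha : f + n i = ∑ k, (a k : ℤ) * n k) (hij : i ≠ j) (hz : ∀ k, k ≠ j → a k = 0) :
    (i, j) ∈ Gam n f := by
  have e : f + n i = (a j : ℤ) * n j := by
    rw [ha, Finset.sum_eq_single j]
    · intro b _ hb; simp [hz b hb]
    · simp
  have e' : (a j : ℤ) * n j - n i = f := by linarith
  refine ⟨hij, a j, ⟨by rw [e']; exact hf.1, ?_⟩, e'⟩
  intro L hL
  by_contra hlt
  apply hL
  have h3 : (L : ℤ) = a j + 1 + (L - a j - 1 : ℕ) := by omega
  have h4 : (L : ℤ) * n j - n i = (f + n j) + ((L - a j - 1 : ℕ) : ℤ) * n j := by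
    rw [h3, ← e']; ring
  rw [h4]
  exact NS_add (hf.2 j) (NS_mul n _ j)

open Classical in
theorem row_count {n : Fin 4 → ℕ} {f : ℤ} (hf : f ∈ PF n) (a : Fin 4 → ℕ) (i : Fin 4)
    (ha : f + n i = ∑ k, (a k : ℤ) * n k) (h0 : f + n i ≠ 0) :
    (∑ j, if j ≠ i ∧ a j = 0 then 1 else 0) ≤ 1 + if (∃ j, (i, j) ∈ Gam n f) then 1 else 0 := by
  have hd : a i = 0 := by
    by_contra h
    have := NS_sub (n := n) a i h
    rw [← ha] at this
    exact hf.1 (by simpa using this)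
  have hne : ¬ ∀ k, a k = 0 := by
    intro h
    apply h0
    rw [ha]; simp [h]
  by_cases hP : ∃ j, (i, j) ∈ Gam n f
  · rw [if_pos hP]
    rw [Fin.sum_univ_four]
    fin_cases i <;> simp [Fin.forall_fin_succ] at hd hne ⊢ <;>
      split_ifs <;> simp_all
  · rw [if_neg hP]
    have key : ∀ j, i ≠ j → ¬ (∀ k, k ≠ j → a k = 0) :=
      fun j hij hz => hP ⟨j, row_mem hf a i j ha hij hz⟩
    clear hP ha h0
    rw [Fin.sum_univ_four]
    fin_cases i <;> simp [Fin.forall_fin_succ] at hd hne key ⊢ <;>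
      split_ifs <;> simp_all

open Classical in
theorem count_le (n : Fin 4 → ℕ) (f : ℤ) :
    (∑ i, if (∃ j, (i, j) ∈ Gam n f) then 1 else 0) ≤ (Gam n f).ncard := by
  have h := Set.ncard_image_le (f := Prod.fst) (Set.toFinite (Gam n f))
  refine le_trans (le_of_eq ?_) h
  have : Prod.fst '' Gam n f
      = ((Finset.univ.filter fun i => ∃ j, (i, j) ∈ Gam n f : Finset (Fin 4)) : Set (Fin 4)) := by
    ext i; simp
  rw [this, Set.ncard_coe_finset, Finset.card_filter]

theorem stmt18 (n : Fin 4 → ℕ)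
    (hpos : ∀ i, 0 < n i)
    (hgcd : Finset.univ.gcd n = 1)
    (hmin : MinGen n)
    (F : ℤ) (hF : IsFrob n F) (hAS : AlmostSym n F)
    (f : ℤ) (hf : f ∈ PF n) (hfF : f ≠ F) :
    4 ≤ (Gam n f).ncard + (Gam n (F - f)).ncard := by
  classical
  have hg : F - f ∉ NS n := by
    rintro ⟨a, ha⟩
    by_cases h : ∀ k, a k = 0
    · simp [h] at ha; exact hfF (by linarith)
    · push Not at h
      obtain ⟨j, hj⟩ := h
      have h1 := NS_sub (n := n) a j hj
      rw [← ha] at h1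
      have h2 := NS_add h1 (hf.2 j)
      exact hF.1 (by convert h2 using 1; ring)
  have hg' : F - f ∈ PF n := (hAS f hf.1 hg).2
  choose a ha using hf.2
  choose b hb using hg'.2
  have hfn : ∀ i, f + n i ≠ 0 := fun i h =>
    hg (hF.2 _ (by have := hpos i; omega))
  have hgn : ∀ i, F - f + n i ≠ 0 := fun i h =>
    hf.1 (hF.2 _ (by have := hpos i; omega))
  have hz : ∀ i j, j ≠ i → 1 ≤ (if j ≠ i ∧ a i j = 0 then 1 else 0)
      + (if i ≠ j ∧ b j i = 0 then 1 else 0) := by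
    intro i j hij
    by_cases h1 : a i j = 0
    · simp [h1, hij]
    by_cases h2 : b j i = 0
    · simp [h2, hij.symm]
    exfalso
    have h3 := NS_sub (n := n) (a i) j h1
    have h4 := NS_sub (n := n) (b j) i h2
    rw [← ha] at h3
    rw [← hb] at h4
    exact hF.1 (by convert NS_add h3 h4 using 1; ring)
  have hA : ∀ i, _ := fun i => row_count hf (a i) i (ha i) (hfn i)
  have hB : ∀ i, _ := fun i => row_count hg' (b i) i (hb i) (hgn i)
  have cA := count_le n f
  have cB := count_le n (F - f)
  have sA := Finset.sum_le_sum fun i (_ : i ∈ (Finset.univ : Finset (Fin 4))) => hA i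
  have sB := Finset.sum_le_sum fun i (_ : i ∈ (Finset.univ : Finset (Fin 4))) => hB i
  rw [Finset.sum_add_distrib] at sA sB
  have sZ : 12 ≤ (∑ i, ∑ j, if j ≠ i ∧ a i j = 0 then 1 else 0)
      + ∑ i, ∑ j, if j ≠ i ∧ b i j = 0 then 1 else 0 := by
    rw [Finset.sum_comm (f := fun i j => if j ≠ i ∧ b i j = 0 then 1 else 0),
      ← Finset.sum_add_distrib]
    simp only [← Finset.sum_add_distrib]
    have : (12 : ℕ) = ∑ i : Fin 4, ∑ j : Fin 4, if j ≠ i then 1 else 0 := by decide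
    rw [this]
    refine Finset.sum_le_sum fun i _ => Finset.sum_le_sum fun j _ => ?_
    by_cases h : j ≠ i
    · rw [if_pos h]; exact hz i j h
    · rw [if_neg h]; exact Nat.zero_le _
  simp only [Finset.sum_const, Finset.card_univ, Fintype.card_fin, smul_eq_mul] at sA sB
  omega
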